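/- arXiv:2410.04721 — 5 statements merged into one kernel-verified Lean document; each statement's English description precedes it below -/
import Mathlib

section
/- Let p₀ and q₀ be probability measures on ℝ^d and let ᾱ : [0,1] → (0,1] be nonincreasing. For t ∈ [0,1] define p_t as the distribution of √(ᾱ(t))·X + √(1−ᾱ(t))·ε with X ~ p₀ and ε an independent standard Gaussian on ℝ^d (i.e. p_t is the convolution of the pushforward of p₀ under multiplication by √(ᾱ(t)) with the centered Gaussian of covariance (1−ᾱ(t))I), and define q_t analogously from q₀. Then the Kullback–Leibler divergence D_KL(p_t ‖ q_t) is nonincreasing in t: for all 0 ≤ s ≤ t ≤ 1, D_KL(p_t ‖ q_t) ≤ D_KL(p_s ‖ q_s). -/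
/-!
The forward process is Markov. For `s ≤ t` put `r = ᾱ t / ᾱ s ∈ (0, 1]`; then the marginal at time
`t` is obtained from the marginal at time `s` by scaling by `√r` and convolving with the centered
Gaussian of covariance `(1 - r) I`, because `r (1 - ᾱ s) + (1 - r) = 1 - ᾱ t`
(`vpMarginal_eq_map_conv`). This transition does not depend on the initial law, so the claim is an
instance of the data processing inequality: adjoining an independent noise variable leaves the
divergence unchanged, and the map `(x, y) ↦ f x + y` cannot increase it (`klDiv_map_conv_le`).
The inequality is available for Mathlib's `ℝ≥0∞`-valued divergence, which agrees with the
`EReal`-valued one on probability measures (`klDiv_eq_coe`).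
-/

open MeasureTheory ProbabilityTheory

open Classical in
/-- The Kullback–Leibler divergence between two measures: `∫ log (dμ/dν) dμ` when `μ ≪ ν`
(and the log-likelihood ratio is integrable), and `+∞` otherwise. -/
noncomputable def klDiv {α : Type*} [MeasurableSpace α] (μ ν : Measure α) : EReal :=
  if μ ≪ ν ∧ Integrable (llr μ ν) μ then ((∫ x, llr μ ν x ∂μ : ℝ) : EReal) else ⊤

/-- The time-`t` marginal of the variance-preserving forward diffusion started at `ρ`:
the distribution of `√(ᾱ t) • X + √(1 - ᾱ t) • ε` with `X ~ ρ` and `ε` an independent standard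
Gaussian on `ℝ^d`, i.e. the convolution of the pushforward of `ρ` under scaling by `√(ᾱ t)`
with the centered Gaussian of covariance `(1 - ᾱ t) I`. -/
noncomputable def vpMarginal {d : ℕ} (ᾱ : ℝ → ℝ) (ρ : Measure (Fin d → ℝ)) (t : ℝ) :
    Measure (Fin d → ℝ) :=
  (ρ.map (fun x => Real.sqrt (ᾱ t) • x)).conv
    (Measure.pi fun _ : Fin d => gaussianReal 0 (1 - ᾱ t).toNNReal)

/-- For measures of equal total mass the correction term `ν univ - μ univ` in Mathlib's divergence
vanishes, and Gibbs' inequality makes its truncation to `ℝ≥0∞` harmless. -/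
lemma klDiv_eq_coe {α : Type*} [MeasurableSpace α] (μ ν : Measure α)
    [IsProbabilityMeasure μ] [IsProbabilityMeasure ν] :
    klDiv μ ν = ((InformationTheory.klDiv μ ν : ENNReal) : EReal) := by
  by_cases h : μ ≪ ν ∧ Integrable (llr μ ν) μ
  · have h0 := InformationTheory.integral_llr_add_sub_measure_univ_nonneg h.1 h.2
    rw [klDiv, if_pos h, InformationTheory.klDiv_of_ac_of_integrable h.1 h.2,
      EReal.coe_ennreal_ofReal, max_eq_left h0]
    simp
  · rw [klDiv, if_neg h, InformationTheory.klDiv_eq_top_iff.2 fun h1 h2 => h ⟨h1, h2⟩]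
    rfl

lemma klDiv_map_conv_le {E : Type*} [MeasurableSpace E] [AddMonoid E] [MeasurableAdd₂ E]
    (μ ν γ : Measure E) [IsProbabilityMeasure μ] [IsProbabilityMeasure ν]
    [IsProbabilityMeasure γ] {f : E → E} (hf : Measurable f) :
    InformationTheory.klDiv ((μ.map f).conv γ) ((ν.map f).conv γ) ≤
      InformationTheory.klDiv μ ν := by
  have key : ∀ ρ : Measure E, IsProbabilityMeasure ρ →
      (ρ.map f).conv γ = (ρ.prod γ).map (fun z : E × E => f z.1 + z.2) := by
    intro ρ hρ
    have h := Measure.map_prod_map ρ γ hf measurable_id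
    rw [Measure.map_id] at h
    rw [Measure.conv, h, Measure.map_map (by fun_prop) (by fun_prop)]
    rfl
  rw [key μ inferInstance, key ν inferInstance]
  refine (InformationTheory.klDiv_map_le _ _ (by fun_prop)).trans ?_
  rw [← Measure.compProd_const, ← Measure.compProd_const,
    InformationTheory.klDiv_compProd_left]

/-- Convolution of product measures is computed coordinatewise. -/
lemma pi_conv_pi {d : ℕ} (μ ν : Measure ℝ) [IsProbabilityMeasure μ] [IsProbabilityMeasure ν] :
    (Measure.pi fun _ : Fin d => μ).conv (Measure.pi fun _ : Fin d => ν) =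
      Measure.pi fun _ : Fin d => μ.conv ν := by
  have h := (measurePreserving_arrowProdEquivProdArrow ℝ ℝ (Fin d)
    (fun _ => μ) (fun _ => ν)).map_eq
  have h2 := Measure.pi_map_pi (μ := fun _ : Fin d => μ.prod ν)
    (f := fun _ (z : ℝ × ℝ) => z.1 + z.2) (fun _ => by fun_prop)
  simp only [Measure.conv]
  rw [← h2, ← h, Measure.map_map (by fun_prop) (MeasurableEquiv.measurable _)]
  rfl

lemma pi_gaussianReal_map_smul {d : ℕ} (c : ℝ) (v : NNReal) :
    (Measure.pi fun _ : Fin d => gaussianReal 0 v).map (fun x => c • x) =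
      Measure.pi fun _ : Fin d => gaussianReal 0 (.mk (c ^ 2) (sq_nonneg _) * v) := by
  have h := Measure.pi_map_pi (μ := fun _ : Fin d => gaussianReal 0 v)
    (f := fun _ (z : ℝ) => c * z) (fun _ => by fun_prop)
  simp only [gaussianReal_map_const_mul, mul_zero] at h
  exact h

instance {d : ℕ} (ᾱ : ℝ → ℝ) (ρ : Measure (Fin d → ℝ)) [IsProbabilityMeasure ρ] (t : ℝ) :
    IsProbabilityMeasure (vpMarginal ᾱ ρ t) := by
  have : IsProbabilityMeasure (ρ.map (fun x => Real.sqrt (ᾱ t) • x)) :=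
    Measure.isProbabilityMeasure_map (by fun_prop)
  unfold vpMarginal
  infer_instance

/-- The Markov transition of the forward process from time `s` to time `t`. -/
lemma vpMarginal_eq_map_conv {d : ℕ} (ᾱ : ℝ → ℝ) (ρ : Measure (Fin d → ℝ))
    [IsProbabilityMeasure ρ] {s t : ℝ} (hs : 0 < ᾱ s) (hs1 : ᾱ s ≤ 1) (ht : 0 < ᾱ t)
    (hst : ᾱ t ≤ ᾱ s) :
    vpMarginal ᾱ ρ t =
      ((vpMarginal ᾱ ρ s).map (fun x => Real.sqrt (ᾱ t / ᾱ s) • x)).conv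
        (Measure.pi fun _ : Fin d => gaussianReal 0 (1 - ᾱ t / ᾱ s).toNNReal) := by
  have hr : 0 ≤ ᾱ t / ᾱ s := by positivity
  have hr1 : ᾱ t / ᾱ s ≤ 1 := (div_le_one hs).2 hst
  have hprob : IsProbabilityMeasure (ρ.map (fun x => Real.sqrt (ᾱ s) • x)) :=
    Measure.isProbabilityMeasure_map (by fun_prop)
  set c := Real.sqrt (ᾱ t / ᾱ s) with hc
  have hlin : ∀ μ ν : Measure (Fin d → ℝ), SFinite μ → SFinite ν →
      (μ.conv ν).map (fun x => c • x) =
        (μ.map (fun x => c • x)).conv (ν.map (fun x => c • x)) := by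
    intro μ ν _ _
    exact Measure.map_conv_continuousLinearMap
      (c • ContinuousLinearMap.id ℝ (Fin d → ℝ))
  have hcomp : (ρ.map (fun x => Real.sqrt (ᾱ s) • x)).map (fun x => c • x) =
      ρ.map (fun x => Real.sqrt (ᾱ t) • x) := by
    rw [Measure.map_map (by fun_prop) (by fun_prop)]
    congr 1
    funext x
    simp only [Function.comp_apply, smul_smul]
    rw [hc, ← Real.sqrt_mul hr, div_mul_cancel₀ _ hs.ne']
  have hvar : (.mk (c ^ 2) (sq_nonneg _) : NNReal) * (1 - ᾱ s).toNNReal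
      + (1 - ᾱ t / ᾱ s).toNNReal = (1 - ᾱ t).toNNReal := by
    apply NNReal.eq
    rw [NNReal.coe_add, NNReal.coe_mul, NNReal.coe_mk, Real.coe_toNNReal _ (by linarith),
      Real.coe_toNNReal _ (by linarith), Real.coe_toNNReal _ (by linarith), hc, Real.sq_sqrt hr]
    field_simp
    ring
  unfold vpMarginal
  rw [hlin _ _ inferInstance inferInstance, hcomp, pi_gaussianReal_map_smul, Measure.conv_assoc,
    pi_conv_pi, gaussianReal_conv_gaussianReal, add_zero, hvar]

/-- The KL divergence between the marginals of the variance-preserving forward diffusion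
applied to `p₀` and `q₀` is nonincreasing in `t` (Theorem 1 of the paper). -/
theorem klDiv_vpMarginal_antitone {d : ℕ} (p₀ q₀ : Measure (Fin d → ℝ))
    [IsProbabilityMeasure p₀] [IsProbabilityMeasure q₀]
    (ᾱ : ℝ → ℝ) (hᾱ_pos : ∀ t ∈ Set.Icc (0 : ℝ) 1, 0 < ᾱ t)
    (hᾱ_le : ∀ t ∈ Set.Icc (0 : ℝ) 1, ᾱ t ≤ 1)
    (hᾱ_anti : AntitoneOn ᾱ (Set.Icc (0 : ℝ) 1)) :
    ∀ s t : ℝ, 0 ≤ s → s ≤ t → t ≤ 1 →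
      klDiv (vpMarginal ᾱ p₀ t) (vpMarginal ᾱ q₀ t) ≤
        klDiv (vpMarginal ᾱ p₀ s) (vpMarginal ᾱ q₀ s) := by
  intro s t h0 hst h1
  have hs : s ∈ Set.Icc (0 : ℝ) 1 := ⟨h0, hst.trans h1⟩
  have ht : t ∈ Set.Icc (0 : ℝ) 1 := ⟨h0.trans hst, h1⟩
  rw [klDiv_eq_coe, klDiv_eq_coe, EReal.coe_ennreal_le_coe_ennreal_iff,
    vpMarginal_eq_map_conv ᾱ p₀ (hᾱ_pos s hs) (hᾱ_le s hs) (hᾱ_pos t ht) (hᾱ_anti hs ht hst),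
    vpMarginal_eq_map_conv ᾱ q₀ (hᾱ_pos s hs) (hᾱ_le s hs) (hᾱ_pos t ht) (hᾱ_anti hs ht hst)]
  exact klDiv_map_conv_le _ _ _ (by fun_prop)
end

section
/- Let β : ℝ → ℝ be continuous with β(u) ≥ 0 for all u, let t' ∈ (0,1], set ᾱ(t) := exp(−∫_0^t β(u) du) and μ(t) := exp(∫_{t'}^t (1/2)β(u) du). Let s : ℝ^d × ℝ → ℝ^d and let x : [0,t'] → ℝ^d be such that u ↦ s(x(u), u) is continuous on [0,t'] and ‖s(x(u), u)‖ ≤ C for all u ∈ [0,t'] for some C ≥ 0. Then ‖∫_{t'}^0 β(u) μ(u) s(x(u), u) du‖ ≤ 2C(1 − √(ᾱ(t'))). -/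
/-!
Since `μ' = β μ / 2`, the nonnegative weight `β μ` is the derivative of `2 μ`. Bounding the score
by `C` under the integral and applying the fundamental theorem of calculus gives
`2 C (μ t' - μ 0)`, where `μ t' = 1` and `μ 0 = √(ᾱ t')`.
-/

open MeasureTheory intervalIntegral

/-- Bound on the weighted score integral (term `T₃` in the proof of Theorem 2): if
`‖s(x(u), u)‖ ≤ C` on `[0, t']`, then
`‖∫_{t'}^0 β(u) μ(u) s(x(u), u) du‖ ≤ 2 C (1 - √(ᾱ(t')))`, where
`ᾱ(t) = exp(-∫_0^t β(u) du)` and `μ(t) = exp(∫_{t'}^t (1/2) β(u) du)`. -/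
theorem norm_integral_beta_mu_score_le {d : ℕ} {β : ℝ → ℝ} (hβc : Continuous β)
    (hβ : ∀ u, 0 ≤ β u) (t' : ℝ) (ht'0 : 0 < t') (ht'1 : t' ≤ 1)
    (ᾱ : ℝ → ℝ) (hᾱ : ∀ t, ᾱ t = Real.exp (-∫ u in (0 : ℝ)..t, β u))
    (μ : ℝ → ℝ) (hμ : ∀ t, μ t = Real.exp (∫ u in t'..t, (1 / 2) * β u))
    (s : EuclideanSpace ℝ (Fin d) → ℝ → EuclideanSpace ℝ (Fin d))
    (x : ℝ → EuclideanSpace ℝ (Fin d))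
    (hsc : ContinuousOn (fun u => s (x u) u) (Set.Icc (0 : ℝ) t'))
    (C : ℝ) (hC : 0 ≤ C) (hs : ∀ u ∈ Set.Icc (0 : ℝ) t', ‖s (x u) u‖ ≤ C) :
    ‖∫ u in t'..(0 : ℝ), (β u * μ u) • s (x u) u‖ ≤ 2 * C * (1 - Real.sqrt (ᾱ t')) := by
  have hderiv : ∀ t, HasDerivAt μ (1 / 2 * β t * μ t) t := by
    intro t
    have hβc' : Continuous fun u => (1 / 2) * β u := by fun_prop
    have h := (hβc'.integral_hasStrictDerivAt t' t).hasDerivAt.exp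
    rw [show μ = fun t => Real.exp (∫ u in t'..t, (1 / 2) * β u) from funext hμ]
    convert h using 1
    ring
  have hμc : Continuous μ :=
    continuous_iff_continuousAt.2 fun t => (hderiv t).continuousAt
  have hint : Continuous fun u => C * (β u * μ u) := by fun_prop
  have hμt : μ t' = 1 := by simp [hμ]
  have hμ0 : μ 0 = Real.sqrt (ᾱ t') := by
    rw [hμ, hᾱ, ← Real.exp_half, intervalIntegral.integral_const_mul,
      intervalIntegral.integral_symm]
    congr 1
    ring
  have hFTC : ∫ u in (0 : ℝ)..t', C * (β u * μ u) = 2 * C * (1 - Real.sqrt (ᾱ t')) := by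
    rw [intervalIntegral.integral_eq_sub_of_hasDerivAt (f := fun u => 2 * C * μ u)
      (f' := fun u => C * (β u * μ u))
      (fun u _ => ((hderiv u).const_mul (2 * C)).congr_deriv (by ring)) (hint.intervalIntegrable _ _), hμt, hμ0]
    ring
  rw [intervalIntegral.integral_symm, norm_neg, ← hFTC]
  refine intervalIntegral.norm_integral_le_of_norm_le ht'0.le
    (Filter.Eventually.of_forall fun u hu => ?_) (hint.intervalIntegrable _ _)
  have hw : 0 ≤ β u * μ u := mul_nonneg (hβ u) (by rw [hμ]; positivity)
  rw [norm_smul, Real.norm_of_nonneg hw, mul_comm]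
  exact mul_le_mul_of_nonneg_right (hs u (Set.Ioc_subset_Icc_self hu)) hw
end

section
/- Let β : ℝ → ℝ be continuous with β(u) ≥ 0 for all u, let t' ∈ (0,1], set ᾱ(t) := exp(−∫_0^t β(u) du) and μ(t) := exp(∫_{t'}^t (1/2)β(u) du). Let x₀, ε ∈ ℝ^d, let s : ℝ^d × ℝ → ℝ^d, and let x : [0,t'] → ℝ^d be differentiable with x'(t) = −(1/2)β(t)(x(t) + s(x(t), t)) for all t ∈ [0,t'], with u ↦ s(x(u),u) continuous on [0,t'], and with terminal condition x(t') = √(ᾱ(t'))·x₀ + √(1−ᾱ(t'))·ε. Then the deviation of the reconstruction from the starting point decomposes as x(0) − x₀ = (√(1−ᾱ(t'))/√(ᾱ(t')))·ε − (1/(2√(ᾱ(t')))) ∫_{t'}^0 β(u) μ(u) s(x(u), u) du. -/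
/-! The function `μ` is an integrating factor: `μ' = (1/2) β μ`, so along the flow
`(μ • x)' = -(1/2) β μ • s(x, ·)`. Integrating over `[0, t']` with `μ t' = 1` and
`μ 0 = √(ᾱ t')`, inserting the terminal condition, and dividing by `μ 0` gives the claim. -/

open MeasureTheory intervalIntegral

/-- Decomposition of the deviation of the SDEdit reconstruction from its starting point:
if `x` solves the reverse probability-flow ODE `x'(t) = -(1/2) β(t) (x(t) + s(x(t), t))` on
`[0, t']` with terminal condition `x(t') = √(ᾱ(t')) x₀ + √(1 - ᾱ(t')) ε`, then
`x(0) - x₀ = (√(1-ᾱ(t'))/√(ᾱ(t'))) ε - (1/(2√(ᾱ(t')))) ∫_{t'}^0 β(u) μ(u) s(x(u), u) du`. -/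
theorem sdedit_deviation_decomposition {d : ℕ} {β : ℝ → ℝ} (hβc : Continuous β)
    (hβ : ∀ u, 0 ≤ β u) (t' : ℝ) (ht'0 : 0 < t') (ht'1 : t' ≤ 1)
    (ᾱ : ℝ → ℝ) (hᾱ : ∀ t, ᾱ t = Real.exp (-∫ u in (0 : ℝ)..t, β u))
    (μ : ℝ → ℝ) (hμ : ∀ t, μ t = Real.exp (∫ u in t'..t, (1 / 2) * β u))
    (x₀ ε : EuclideanSpace ℝ (Fin d))
    (s : EuclideanSpace ℝ (Fin d) → ℝ → EuclideanSpace ℝ (Fin d))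
    (x : ℝ → EuclideanSpace ℝ (Fin d))
    (hx : ∀ t ∈ Set.Icc (0 : ℝ) t',
      HasDerivWithinAt x (-((1 / 2) * β t) • (x t + s (x t) t)) (Set.Icc (0 : ℝ) t') t)
    (hsc : ContinuousOn (fun u => s (x u) u) (Set.Icc (0 : ℝ) t'))
    (hterm : x t' = Real.sqrt (ᾱ t') • x₀ + Real.sqrt (1 - ᾱ t') • ε) :
    x 0 - x₀ = (Real.sqrt (1 - ᾱ t') / Real.sqrt (ᾱ t')) • ε -
      (1 / (2 * Real.sqrt (ᾱ t'))) • ∫ u in t'..(0 : ℝ), (β u * μ u) • s (x u) u := by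
  have hμd : ∀ t, HasDerivAt μ (μ t * ((1 / 2) * β t)) t := by
    intro t
    have hc : Continuous fun u => (1 / 2) * β u := by fun_prop
    have h := (intervalIntegral.integral_hasDerivAt_right (hc.intervalIntegrable t' t)
      (hc.stronglyMeasurableAtFilter _ _) hc.continuousAt).exp
    rw [funext hμ]
    exact h
  have hμc : Continuous μ := continuous_iff_continuousAt.2 fun t => (hμd t).continuousAt
  have hμt : μ t' = 1 := by simp [hμ]
  have hμ0 : μ 0 = Real.sqrt (ᾱ t') := by
    rw [hμ, hᾱ, Real.sqrt_eq_rpow, ← Real.exp_mul, intervalIntegral.integral_const_mul,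
      intervalIntegral.integral_symm]
    ring_nf
  have hpos : 0 < Real.sqrt (ᾱ t') := by
    rw [hᾱ]
    positivity
  have hxc : ContinuousOn x (Set.Icc 0 t') := fun t ht => (hx t ht).continuousWithinAt
  have hF : ∫ u in (0 : ℝ)..t', (-(1 / 2 : ℝ)) • ((β u * μ u) • s (x u) u)
      = μ t' • x t' - μ 0 • x 0 := by
    refine intervalIntegral.integral_eq_sub_of_hasDerivAt_of_le (f := fun t => μ t • x t)
      ht'0.le (hμc.continuousOn.smul hxc) (fun t ht => ?_)
      (ContinuousOn.intervalIntegrable ?_)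
    · have h := (hμd t).smul
        ((hx t (Set.Ioo_subset_Icc_self ht)).hasDerivAt (Icc_mem_nhds ht.1 ht.2))
      -- the integrating factor cancels the linear term of the drift
      refine h.congr_deriv ?_
      module
    · rw [Set.uIcc_of_le ht'0.le]
      exact ((hβc.mul hμc).continuousOn.smul hsc).const_smul (-(1 / 2 : ℝ))
  rw [intervalIntegral.integral_smul, intervalIntegral.integral_symm, hμt, hμ0, hterm] at hF
  set I := ∫ u in t'..(0 : ℝ), (β u * μ u) • s (x u) u
  have hne := hpos.ne'
  set r := Real.sqrt (ᾱ t')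
  have hsol : r • x 0 = r • x₀ + Real.sqrt (1 - ᾱ t') • ε - (1 / 2 : ℝ) • I := by
    have h : r • x 0 = (1 : ℝ) • (r • x₀ + Real.sqrt (1 - ᾱ t') • ε)
        - (-(1 / 2 : ℝ)) • (-I) := by
      rw [hF]
      abel
    rw [h]
    module
  have hx0 : x 0 = r⁻¹ • (r • x₀ + Real.sqrt (1 - ᾱ t') • ε - (1 / 2 : ℝ) • I) := by
    rw [← hsol, inv_smul_smul₀ hne]
  rw [hx0, smul_sub, smul_add, inv_smul_smul₀ hne]
  module
end

section
/- Let β : ℝ → ℝ be continuous with β(u) ≥ 0 for all u, let t' ∈ (0,1], and set ᾱ(t) := exp(−∫_0^t β(u) du). Let x₀, ε ∈ ℝ^d, let s : ℝ^d × ℝ → ℝ^d satisfy the global bound ‖s(x, t)‖ ≤ C for all x, t, and let x : [0,t'] → ℝ^d be differentiable with x'(t) = −(1/2)β(t)(x(t) + s(x(t), t)) for all t ∈ [0,t'], with u ↦ s(x(u),u) continuous on [0,t'], and with terminal condition x(t') = √(ᾱ(t'))·x₀ + √(1−ᾱ(t'))·ε. Then ‖x(0) − x₀‖ ≤ (1 −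 √(ᾱ(t')))·(‖x₀‖ + C/ᾱ(t')) + (√(1−ᾱ(t'))/√(ᾱ(t')))·‖ε‖. -/
/-!
With the integrating factor `E t = exp (½ ∫₀ᵗ β) = 1 / √(ᾱ t)`, the curve `y = E • x` satisfies
`y' = -½ β E • s`, so `‖y'‖ ≤ C E'` and hence `‖y t' - y 0‖ ≤ C (E t' - 1)`. Here `y 0 = x 0`,
and the terminal condition gives `y t' = x₀ + (√(1 - ᾱ t') / √(ᾱ t')) • ε`. The triangle inequality
yields the bound with `C (1 - √ᾱ) / √ᾱ`, which is at most `C (1 - √ᾱ) / ᾱ` because `ᾱ ≤ 1`.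
-/

open MeasureTheory intervalIntegral

/-- Pointwise form of Theorem 2 of the paper: if `‖s(·,·)‖ ≤ C` globally and `x` solves the
reverse probability-flow ODE `x'(t) = -(1/2) β(t) (x(t) + s(x(t), t))` on `[0, t']` with
terminal condition `x(t') = √(ᾱ(t')) x₀ + √(1 - ᾱ(t')) ε`, then
`‖x(0) - x₀‖ ≤ (1 - √(ᾱ(t'))) (‖x₀‖ + C/ᾱ(t')) + (√(1-ᾱ(t'))/√(ᾱ(t'))) ‖ε‖`. -/
theorem sdedit_deviation_bound {d : ℕ} {β : ℝ → ℝ} (hβc : Continuous β)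
    (hβ : ∀ u, 0 ≤ β u) (t' : ℝ) (ht'0 : 0 < t') (ht'1 : t' ≤ 1)
    (ᾱ : ℝ → ℝ) (hᾱ : ∀ t, ᾱ t = Real.exp (-∫ u in (0 : ℝ)..t, β u))
    (x₀ ε : EuclideanSpace ℝ (Fin d))
    (s : EuclideanSpace ℝ (Fin d) → ℝ → EuclideanSpace ℝ (Fin d))
    (C : ℝ) (hs : ∀ z t, ‖s z t‖ ≤ C)
    (x : ℝ → EuclideanSpace ℝ (Fin d))
    (hx : ∀ t ∈ Set.Icc (0 : ℝ) t',
      HasDerivWithinAt x (-((1 / 2) * β t) • (x t + s (x t) t)) (Set.Icc (0 : ℝ) t') t)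
    (hsc : ContinuousOn (fun u => s (x u) u) (Set.Icc (0 : ℝ) t'))
    (hterm : x t' = Real.sqrt (ᾱ t') • x₀ + Real.sqrt (1 - ᾱ t') • ε) :
    ‖x 0 - x₀‖ ≤ (1 - Real.sqrt (ᾱ t')) * (‖x₀‖ + C / ᾱ t') +
      (Real.sqrt (1 - ᾱ t') / Real.sqrt (ᾱ t')) * ‖ε‖ := by
  have hC : 0 ≤ C := (norm_nonneg _).trans (hs x₀ 0)
  set E : ℝ → ℝ := fun t => Real.exp ((1 / 2) * ∫ u in (0 : ℝ)..t, β u) with hE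
  have hE' : ∀ t, HasDerivAt E (E t * ((1 / 2) * β t)) t := fun t =>
    ((hβc.integral_hasStrictDerivAt 0 t).hasDerivAt.const_mul (1 / 2)).exp
  have hEpos : ∀ t, 0 < E t := fun t => Real.exp_pos _
  have hE0 : E 0 = 1 := by simp [hE]
  have hα : ᾱ t' = ((E t')⁻¹) ^ 2 := by
    rw [hᾱ, hE, ← Real.exp_neg, ← Real.exp_nat_mul]
    congr 1
    push_cast
    ring
  have hsqrt : Real.sqrt (ᾱ t') = (E t')⁻¹ := by
    rw [hα, Real.sqrt_sq (inv_pos.2 (hEpos _)).le]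
  have hE1 : 1 ≤ E t' := Real.one_le_exp
    (mul_nonneg (by norm_num) (intervalIntegral.integral_nonneg ht'0.le fun u _ => hβ u))
  have hy : ∀ t ∈ Set.Icc (0 : ℝ) t', HasDerivWithinAt (fun t => E t • x t - x 0)
      (-(E t * ((1 / 2) * β t)) • s (x t) t) (Set.Icc (0 : ℝ) t') t := by
    intro t ht
    refine (((hE' t).hasDerivWithinAt.smul (hx t ht)).sub_const (x 0)).congr_deriv ?_
    module
  have key : ‖E t' • x t' - x 0‖ ≤ C * (E t' - 1) := by
    refine image_norm_le_of_norm_deriv_right_le_deriv_boundary (a := 0) (b := t')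
      (f := fun t => E t • x t - x 0) (B := fun t => C * (E t - 1))
      (f' := fun t => -(E t * ((1 / 2) * β t)) • s (x t) t)
      (B' := fun t => C * (E t * ((1 / 2) * β t)))
      (fun t ht => (hy t ht).continuousWithinAt) ?_ ?_ ?_ ?_ (Set.right_mem_Icc.2 ht'0.le)
    · intro t ht
      exact (hy t (Set.Ico_subset_Icc_self ht)).mono_of_mem_nhdsWithin
        (Icc_mem_nhdsGE_of_mem ht)
    · simp [hE0]
    · exact fun t => ((hE' t).sub_const 1).const_mul C
    · intro t _
      have h0 : 0 ≤ E t * ((1 / 2) * β t) :=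
        mul_nonneg (hEpos t).le (mul_nonneg (by norm_num) (hβ t))
      rw [norm_smul, norm_neg, Real.norm_of_nonneg h0, mul_comm]
      exact mul_le_mul_of_nonneg_right (hs _ _) h0
  have hyt : E t' • x t' = x₀ + (Real.sqrt (1 - ᾱ t') * E t') • ε := by
    rw [hterm, hsqrt, smul_add, smul_smul, smul_smul, mul_inv_cancel₀ (hEpos t').ne', one_smul,
      mul_comm]
  have htri : ‖x 0 - x₀‖ ≤ C * (E t' - 1) + Real.sqrt (1 - ᾱ t') * E t' * ‖ε‖ := by
    have h : x 0 - x₀ = -(E t' • x t' - x 0) + (Real.sqrt (1 - ᾱ t') * E t') • ε := by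
      rw [hyt]
      abel
    rw [h]
    refine (norm_add_le _ _).trans (add_le_add (by rwa [norm_neg]) ?_)
    rw [norm_smul, Real.norm_of_nonneg (mul_nonneg (Real.sqrt_nonneg _) (hEpos t').le)]
  have hfac : (1 - (E t')⁻¹) * (C / ᾱ t') = C * (E t' - 1) * E t' := by
    have := (hEpos t').ne'
    rw [hα]
    field_simp
  have h1 : C * (E t' - 1) ≤ C * (E t' - 1) * E t' :=
    le_mul_of_one_le_right (mul_nonneg hC (sub_nonneg.2 hE1)) hE1
  have h2 : 0 ≤ (1 - (E t')⁻¹) * ‖x₀‖ :=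
    mul_nonneg (sub_nonneg.2 (inv_le_one_of_one_le₀ hE1)) (norm_nonneg _)
  rw [hsqrt, mul_add, hfac, div_inv_eq_mul]
  linarith
end

section
/- Let β : ℝ → ℝ be continuous with β(u) ≥ 0 for all u, let t' ∈ (0,1], set ᾱ(t) := exp(−∫_0^t β(u) du) and μ(t) := exp(∫_{t'}^t (1/2)β(u) du). Let s : ℝ^d × Y × ℝ → ℝ^d be a conditional score function, let y, ỹ ∈ Y with D ≥ 0 a bound such that ‖s(z, y, u) − s(z', ỹ, u)‖ ≤ K·D whenever z, z' lie on the respective trajectories below. Suppose x̃, x̂ : [0,t'] → ℝ^d are differentiable with x̃'(t) = −(1/2)β(t)(x̃(t) + s(x̃(t), y, t)) and x̂'(t) = −(1/2)β(t)(x̂(t) + s(x̂(t), ỹ, t)) on [0,t'], share the same terminal value x̃(t') = x̂(t'), the maps u ↦ s(x̃(u),y,u) and u ↦ s(x̂(u),ỹ,u) are continuous on [0,t'], and ‖s(x̃(u), y, u) − s(x̂(u), ỹ, u)‖ ≤ K·D for all u ∈ [0,t']. Then ‖x̃(0) − x̂(0)‖ ≤ K·D·(1 − √(ᾱ(t')))/ᾱ(t').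 -/
open MeasureTheory intervalIntegral

/-!
The function `μ` is an integrating factor: with `w = μ • (xTil - xHat)` the linear drift cancels and
`w' = -(β / 2) μ • (s(xTil, y) - s(xHat, y'))`, whose norm is at most `K D (β / 2) μ = K D μ'`.
As `w(t') = 0` and `μ(t') = 1`, the mean value inequality gives
`μ(0) ‖xTil(0) - xHat(0)‖ ≤ K D (1 - μ(0))`. Finally `μ(0) = √ᾱ(t')`, and since `ᾱ(t') ≤ 1` the
denominator `√ᾱ(t')` may be replaced by the smaller number `ᾱ(t')`, which only enlarges the bound.
-/

/-- Intermediate claim in the proof of Theorem 3: two solutions of the conditional reverse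
probability-flow ODE under two different text conditions `y, y'`, started from the same
terminal point at time `t'`, satisfy
`‖xTil(0) - xHat(0)‖ ≤ K D (1 - √(ᾱ(t'))) / ᾱ(t')` whenever the conditional scores along the two
trajectories differ by at most `K D`. -/
theorem conditional_score_discrepancy_bound {d : ℕ} {Y : Type*} {β : ℝ → ℝ}
    (hβc : Continuous β) (hβ : ∀ u, 0 ≤ β u) (t' : ℝ) (ht'0 : 0 < t') (ht'1 : t' ≤ 1)
    (ᾱ : ℝ → ℝ) (hᾱ : ∀ t, ᾱ t = Real.exp (-∫ u in (0 : ℝ)..t, β u))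
    (μ : ℝ → ℝ) (hμ : ∀ t, μ t = Real.exp (∫ u in t'..t, (1 / 2) * β u))
    (s : EuclideanSpace ℝ (Fin d) → Y → ℝ → EuclideanSpace ℝ (Fin d))
    (y y' : Y) (K D : ℝ) (hK : 0 ≤ K) (hD : 0 ≤ D)
    (xTil xHat : ℝ → EuclideanSpace ℝ (Fin d))
    (hxTil : ∀ t ∈ Set.Icc (0 : ℝ) t',
      HasDerivWithinAt xTil (-((1 / 2) * β t) • (xTil t + s (xTil t) y t)) (Set.Icc (0 : ℝ) t') t)
    (hxHat : ∀ t ∈ Set.Icc (0 : ℝ) t',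
      HasDerivWithinAt xHat (-((1 / 2) * β t) • (xHat t + s (xHat t) y' t)) (Set.Icc (0 : ℝ) t') t)
    (hterm : xTil t' = xHat t')
    (hc1 : ContinuousOn (fun u => s (xTil u) y u) (Set.Icc (0 : ℝ) t'))
    (hc2 : ContinuousOn (fun u => s (xHat u) y' u) (Set.Icc (0 : ℝ) t'))
    (hdiff : ∀ u ∈ Set.Icc (0 : ℝ) t', ‖s (xTil u) y u - s (xHat u) y' u‖ ≤ K * D) :
    ‖xTil 0 - xHat 0‖ ≤ K * D * (1 - Real.sqrt (ᾱ t')) / ᾱ t' := by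
  have hc : Continuous fun u => (1 / 2) * β u := by fun_prop
  have hμd : ∀ t, HasDerivAt μ (μ t * ((1 / 2) * β t)) t := by
    intro t
    have h := (integral_hasDerivAt_right (hc.intervalIntegrable t' t)
      (hc.stronglyMeasurableAtFilter _ _) hc.continuousAt).exp
    rw [← hμ t] at h
    exact h.congr_of_eventuallyEq (Filter.Eventually.of_forall hμ)
  have hμpos : ∀ t, 0 < μ t := fun t => by rw [hμ]; exact Real.exp_pos _
  have hμ1 : μ t' = 1 := by simp [hμ]
  have hsq : ᾱ t' = μ 0 ^ 2 := by
    rw [hᾱ, hμ, ← Real.exp_nat_mul, integral_symm, intervalIntegral.integral_const_mul]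
    congr 1
    push_cast
    ring
  have hsqrt : Real.sqrt (ᾱ t') = μ 0 := by rw [hsq, Real.sqrt_sq (hμpos 0).le]
  have hμ0 : μ 0 ≤ 1 := by
    rw [hμ, Real.exp_le_one_iff, integral_symm, neg_nonpos]
    exact integral_nonneg ht'0.le fun u _ => mul_nonneg (by norm_num) (hβ u)
  have hw : ∀ t ∈ Set.Icc (0 : ℝ) t',
      HasDerivWithinAt (fun t => μ t • (xTil t - xHat t) - μ 0 • (xTil 0 - xHat 0))
        (-(μ t * ((1 / 2) * β t)) • (s (xTil t) y t - s (xHat t) y' t))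
        (Set.Icc (0 : ℝ) t') t := by
    intro t ht
    have h := ((hμd t).hasDerivWithinAt.smul ((hxTil t ht).sub (hxHat t ht))).sub_const
      (μ 0 • (xTil 0 - xHat 0))
    refine h.congr_deriv ?_
    simp only [Pi.sub_apply]
    module
  -- The inequality is propagated forward from time `0`, so `w` is compared with its value there.
  have hbound := image_norm_le_of_norm_deriv_right_le_deriv_boundary
    (a := 0) (b := t') (B := fun t => K * D * (μ t - μ 0))
    (B' := fun t => K * D * (μ t * ((1 / 2) * β t)))
    (fun t ht => (hw t ht).continuousWithinAt)
    (fun t ht => (hw t (Set.Ico_subset_Icc_self ht)).mono_of_mem_nhdsWithin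
      (Icc_mem_nhdsGE_of_mem ht))
    (by simp) (fun t => ((hμd t).sub_const _).const_mul _)
    (fun t ht => by
      have hm : 0 ≤ μ t * ((1 / 2) * β t) :=
        mul_nonneg (hμpos t).le (mul_nonneg (by norm_num) (hβ t))
      rw [norm_smul, norm_neg, Real.norm_of_nonneg hm, mul_comm]
      exact mul_le_mul_of_nonneg_right (hdiff t (Set.Ico_subset_Icc_self ht)) hm)
    (Set.right_mem_Icc.2 ht'0.le)
  simp only [hterm, sub_self, smul_zero, zero_sub, norm_neg, norm_smul, hμ1,
    Real.norm_of_nonneg (hμpos 0).le] at hbound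
  rw [hsqrt, hsq, le_div_iff₀ (pow_pos (hμpos 0) 2)]
  calc ‖xTil 0 - xHat 0‖ * μ 0 ^ 2 = (μ 0 * ‖xTil 0 - xHat 0‖) * μ 0 := by ring
    _ ≤ μ 0 * ‖xTil 0 - xHat 0‖ :=
        mul_le_of_le_one_right (mul_nonneg (hμpos 0).le (norm_nonneg _)) hμ0
    _ ≤ K * D * (1 - μ 0) := hbound
end
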